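/- Let L and K be integers with 1 ≤ K ≤ L < 2K, let δ > 0 be a real number, and let x_1, …, x_L be real numbers. Define ℋ := {l ∈ {1,…,L} : there exists y ∈ ℝ with y ≤ x_l ≤ y + 2δ such that |{l' ∈ {1,…,L} : y ≤ x_{l'} ≤ y + 2δ}| ≥ K}. Suppose there exist a set 𝒢 ⊆ {1,…,L} with |𝒢| ≥ K and a real number a such that |x_l − a| < δ for all l ∈ 𝒢. Then 𝒢 ⊆ ℋ, and |x_l − a| < 3δ for every l ∈ ℋ. -/

import Mathlib

open Classical in
/-- The label `l` is retained if `x l` lies in some interval of length `2δ`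
containing at least `K` of the `L` values. -/
def retained (L K : ℕ) (δ : ℝ) (x : Fin L → ℝ) (l : Fin L) : Prop :=
  ∃ y : ℝ, y ≤ x l ∧ x l ≤ y + 2 * δ ∧
    K ≤ (Finset.univ.filter (fun l' => y ≤ x l' ∧ x l' ≤ y + 2 * δ)).card

/-- If at least `K` of the values lie within distance `δ` of `a` (the good
values, labels in `𝒢`), then every good label is retained and every retained
value is within `3δ` of `a`. -/
theorem retained_values_near_truth
    (L K : ℕ) (hK : 1 ≤ K) (hKL : K ≤ L) (hL2K : L < 2 * K)
    (δ : ℝ) (hδ : 0 < δ) (x : Fin L → ℝ)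
    (G : Finset (Fin L)) (hG : K ≤ G.card)
    (a : ℝ) (hgood : ∀ l ∈ G, |x l - a| < δ) :
    (∀ l ∈ G, retained L K δ x l) ∧
    (∀ l : Fin L, retained L K δ x l → |x l - a| < 3 * δ) := by
  classical
  constructor
  · intro l hl
    have h := abs_lt.mp (hgood l hl)
    refine ⟨a - δ, by linarith, by linarith, hG.trans (Finset.card_le_card ?_)⟩
    intro m hm
    have h' := abs_lt.mp (hgood m hm)
    simp only [Finset.mem_filter, Finset.mem_univ, true_and]
    constructor <;> linarith
  · rintro l ⟨y, h1, h2, h3⟩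
    obtain ⟨m, hm⟩ := Finset.inter_nonempty_of_card_lt_card_add_card
      (Finset.subset_univ G)
      (Finset.subset_univ (Finset.univ.filter (fun l' => y ≤ x l' ∧ x l' ≤ y + 2 * δ)))
      (show (Finset.univ : Finset (Fin L)).card < G.card + _ by
        rw [Finset.card_univ, Fintype.card_fin]
        refine lt_of_lt_of_le (by omega : L < K + K) (add_le_add hG ?_)
        convert h3)
    simp only [Finset.mem_inter, Finset.mem_filter, Finset.mem_univ, true_and] at hm
    have h' := abs_lt.mp (hgood m hm.1)
    rw [abs_lt]
    constructor <;> linarith [hm.2.1, hm.2.2]
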